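/- Let α and β₂ be real constants and define T₂ : (0,∞) → ℝ by T₂(z) = β₂ + α·(1+z²)^{1/3}·(2 + √(4+3z²))^{2/3}/(z·(5 + 3z² + 2√(4+3z²))^{1/6}). Then T₂ is differentiable on (0,∞) and satisfies (z − z√(4+3z²))·T₂′(z) − T₂(z) + β₂ = 0 for all z > 0; consequently T₂ satisfies the classical angular equation 3z²(1+z²)T₂′² + 2zT₂T₂′ − T₂² − 2β₂zT₂′ + 2β₂T₂ − β₂² = 0 on (0,∞). Moreover, every differentiable function T : (0,∞) → ℝ satisfying (z − z√(4+3z²))T′(z) − T(z) + β₂ = 0 for all z > 0 equals T₂ for some real α. -/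

import Mathlib

open Real in
/-- The particular solution `T₂` of the linear factor
`(z − z√(4+3z²))T′ − T + β₂ = 0` of the classical angular equation. -/
noncomputable def Tsol₂ (α β₂ z : ℝ) : ℝ :=
  β₂ + α * (1 + z ^ 2) ^ ((1 : ℝ) / 3) * (2 + sqrt (4 + 3 * z ^ 2)) ^ ((2 : ℝ) / 3)
    / (z * (5 + 3 * z ^ 2 + 2 * sqrt (4 + 3 * z ^ 2)) ^ ((1 : ℝ) / 6))

/-!
Put `s = √(4+3z²)`. Then `3(1+z²) = (s−1)(s+1)` and `5+3z²+2s = (s+1)²`, so the powers of `s+1` in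
`T₂` cancel and `T₂ − β₂` is `α` times `E(z) = ((s−1)(s+2)²/3)^{1/3} / z`. Since
`((s−1)(s+2)²/3)′ = 3z(s+2)`, the logarithmic derivative of `E` is `1/(z−zs)`, which is the linear
equation. Conversely, for any solution `T` the quotient `(T−β₂)/E` has zero derivative. The
quadratic equation factors into the linear one and its conjugate under `s ↦ −s`.
-/

/-- A solution, positive on `(0,∞)`, of the homogeneous equation `(z − z√(4+3z²))E′ = E`.
The three roots in `Tsol₂` are merged into a single cube root. -/
noncomputable def homogeneousSolution (z : ℝ) : ℝ :=
  ((√(4 + 3 * z ^ 2) - 1) * (√(4 + 3 * z ^ 2) + 2) ^ 2 / 3) ^ ((1 : ℝ) / 3) / z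

section Wronskian

variable {𝕜 𝕜' F : Type*} [RCLike 𝕜] [NontriviallyNormedField 𝕜'] [NormedAlgebra 𝕜 𝕜']
  [NormedAddCommGroup F] [NormedSpace 𝕜 F] [NormedSpace 𝕜' F] [IsScalarTower 𝕜 𝕜' F]

theorem exists_eq_smul_of_smul_deriv_eq_deriv_smul {s : Set 𝕜} {f : 𝕜 → F} {g : 𝕜 → 𝕜'}
    (hs : IsOpen s) (hs' : IsPreconnected s)
    (hf : DifferentiableOn 𝕜 f s) (hg : DifferentiableOn 𝕜 g s) (hg₀ : ∀ x ∈ s, g x ≠ 0)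
    (hfg : ∀ x ∈ s, g x • deriv f x = deriv g x • f x) :
    ∃ c : F, ∀ x ∈ s, f x = g x • c := by
  have hquot : ∀ x ∈ s, HasDerivAt (fun y ↦ (g y)⁻¹ • f y) 0 x := by
    intro x hx
    have hfx := (hf.differentiableAt (hs.mem_nhds hx)).hasDerivAt
    have hgx := (hg.differentiableAt (hs.mem_nhds hx)).hasDerivAt
    refine ((hgx.fun_inv (hg₀ x hx)).fun_smul hfx).congr_deriv ?_
    calc (g x)⁻¹ • deriv f x + (-deriv g x / g x ^ 2) • f x
        = (g x ^ 2)⁻¹ • (g x • deriv f x - deriv g x • f x) := by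
          have := hg₀ x hx
          match_scalars <;> field_simp
      _ = 0 := by rw [hfg x hx, sub_self, smul_zero]
  obtain ⟨c, hc⟩ := hs.exists_is_const_of_deriv_eq_zero hs'
    (fun x hx ↦ (hquot x hx).differentiableAt.differentiableWithinAt)
    (fun x hx ↦ (hquot x hx).deriv)
  exact ⟨c, fun x hx ↦ (inv_smul_eq_iff₀ (hg₀ x hx)).1 (hc x hx)⟩

end Wronskian

lemma sq_sqrt_four_add (z : ℝ) : √(4 + 3 * z ^ 2) ^ 2 = 4 + 3 * z ^ 2 :=
  Real.sq_sqrt (by positivity)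

lemma one_lt_sqrt_four_add (z : ℝ) : 1 < √(4 + 3 * z ^ 2) :=
  Real.lt_sqrt_of_sq_lt (by nlinarith [sq_nonneg z])

lemma sub_mul_sqrt_ne_zero {z : ℝ} (hz : z ≠ 0) : z - z * √(4 + 3 * z ^ 2) ≠ 0 := by
  rw [← mul_one_sub]
  exact mul_ne_zero hz (sub_neg.2 (one_lt_sqrt_four_add z)).ne

lemma homogeneousSolution_ne_zero {z : ℝ} (hz : z ≠ 0) : homogeneousSolution z ≠ 0 := by
  have hs := sub_pos.2 (one_lt_sqrt_four_add z)
  exact div_ne_zero (by positivity) hz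

theorem Tsol₂_eq_add_mul_homogeneousSolution (α β₂ z : ℝ) :
    Tsol₂ α β₂ z = β₂ + α * homogeneousSolution z := by
  have hsq := sq_sqrt_four_add z
  have hs := one_lt_sqrt_four_add z
  simp only [Tsol₂, homogeneousSolution]
  generalize √(4 + 3 * z ^ 2) = s at *
  have h_one_add : (1 + z ^ 2) ^ ((1 : ℝ) / 3)
      = ((s - 1) / 3) ^ ((1 : ℝ) / 3) * (s + 1) ^ ((1 : ℝ) / 3) := by
    rw [← Real.mul_rpow (by linarith) (by linarith)]
    congr 1
    linarith
  have h_two_add : (2 + s) ^ ((2 : ℝ) / 3) = ((s + 2) ^ 2) ^ ((1 : ℝ) / 3) := by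
    rw [← Real.rpow_natCast_mul (by linarith), add_comm]
    norm_num
  have h_five_add : (5 + 3 * z ^ 2 + 2 * s) ^ ((1 : ℝ) / 6) = (s + 1) ^ ((1 : ℝ) / 3) := by
    rw [show 5 + 3 * z ^ 2 + 2 * s = (s + 1) ^ 2 by linarith,
      ← Real.rpow_natCast_mul (by linarith)]
    norm_num
  have h_cubeRoot : ((s - 1) * (s + 2) ^ 2 / 3) ^ ((1 : ℝ) / 3)
      = ((s - 1) / 3) ^ ((1 : ℝ) / 3) * ((s + 2) ^ 2) ^ ((1 : ℝ) / 3) := by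
    rw [← Real.mul_rpow (by linarith) (by positivity), div_mul_eq_mul_div]
  have h_pos : (s + 1) ^ ((1 : ℝ) / 3) ≠ 0 := by positivity
  rw [h_one_add, h_two_add, h_five_add, h_cubeRoot]
  field_simp

lemma hasDerivAt_sqrt_four_add (z : ℝ) :
    HasDerivAt (fun y ↦ √(4 + 3 * y ^ 2)) (3 * z / √(4 + 3 * z ^ 2)) z := by
  refine ((((hasDerivAt_pow 2 z).const_mul 3).const_add 4).sqrt (by positivity)).congr_deriv ?_
  push_cast
  field_simp

lemma hasDerivAt_radicand (z : ℝ) :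
    HasDerivAt (fun y ↦ (√(4 + 3 * y ^ 2) - 1) * (√(4 + 3 * y ^ 2) + 2) ^ 2 / 3)
      (3 * z * (√(4 + 3 * z ^ 2) + 2)) z := by
  have hs := hasDerivAt_sqrt_four_add z
  refine (((hs.sub_const 1).fun_mul ((hs.add_const 2).fun_pow 2)).div_const 3).congr_deriv ?_
  field_simp
  ring

theorem hasDerivAt_homogeneousSolution {z : ℝ} (hz : z ≠ 0) :
    HasDerivAt homogeneousSolution
      (homogeneousSolution z / (z - z * √(4 + 3 * z ^ 2))) z := by
  have hsq := sq_sqrt_four_add z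
  have hs := sub_pos.2 (one_lt_sqrt_four_add z)
  have hd := sub_mul_sqrt_ne_zero hz
  have hR : (√(4 + 3 * z ^ 2) - 1) * (√(4 + 3 * z ^ 2) + 2) ^ 2 / 3 ≠ 0 := by positivity
  refine (((hasDerivAt_radicand z).rpow_const (.inl hR)).fun_div
    (hasDerivAt_id' z) hz).congr_deriv ?_
  rw [Real.rpow_sub_one hR, homogeneousSolution]
  generalize ((√(4 + 3 * z ^ 2) - 1) * (√(4 + 3 * z ^ 2) + 2) ^ 2 / 3) ^ ((1 : ℝ) / 3) = r
  generalize √(4 + 3 * z ^ 2) = s at *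
  have hs₂ : s + 2 ≠ 0 := by linarith
  have hs₁ : 1 - s ≠ 0 := by linarith
  rw [← mul_one_sub]
  field_simp
  linear_combination (-(r * (1 - s))) * hsq

theorem hasDerivAt_Tsol₂ (α β₂ : ℝ) {z : ℝ} (hz : z ≠ 0) :
    HasDerivAt (Tsol₂ α β₂) (α * (homogeneousSolution z / (z - z * √(4 + 3 * z ^ 2)))) z := by
  rw [funext (Tsol₂_eq_add_mul_homogeneousSolution α β₂)]
  exact ((hasDerivAt_homogeneousSolution hz).const_mul α).const_add β₂

theorem Tsol₂_linear_equation (α β₂ : ℝ) {z : ℝ} (hz : z ≠ 0) :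
    (z - z * √(4 + 3 * z ^ 2)) * deriv (Tsol₂ α β₂) z - Tsol₂ α β₂ z + β₂ = 0 := by
  rw [(hasDerivAt_Tsol₂ α β₂ hz).deriv, Tsol₂_eq_add_mul_homogeneousSolution, mul_left_comm,
    mul_div_cancel₀ _ (sub_mul_sqrt_ne_zero hz)]
  ring

theorem angular_equation_lhs_eq_neg_mul (z t p b : ℝ) :
    3 * z ^ 2 * (1 + z ^ 2) * p ^ 2 + 2 * z * t * p - t ^ 2 - 2 * b * z * p + 2 * b * t - b ^ 2
      = -(((z - z * √(4 + 3 * z ^ 2)) * p - t + b) *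
          ((z + z * √(4 + 3 * z ^ 2)) * p - t + b)) := by
  linear_combination (-(z ^ 2 * p ^ 2)) * sq_sqrt_four_add z

theorem exists_eq_Tsol₂_of_linear_equation {s : Set ℝ} (hs : IsOpen s) (hs' : IsPreconnected s)
    (hs₀ : 0 ∉ s) {T : ℝ → ℝ} {β₂ : ℝ} (hT : DifferentiableOn ℝ T s)
    (hode : ∀ z ∈ s, (z - z * √(4 + 3 * z ^ 2)) * deriv T z - T z + β₂ = 0) :
    ∃ α : ℝ, ∀ z ∈ s, T z = Tsol₂ α β₂ z := by
  have hne : ∀ z ∈ s, z ≠ 0 := fun z hz ↦ ne_of_mem_of_not_mem hz hs₀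
  have hE := fun z hz ↦ hasDerivAt_homogeneousSolution (hne z hz)
  obtain ⟨α, hα⟩ := exists_eq_smul_of_smul_deriv_eq_deriv_smul hs hs' (hT.sub_const β₂)
    (fun z hz ↦ (hE z hz).differentiableAt.differentiableWithinAt)
    (fun z hz ↦ homogeneousSolution_ne_zero (hne z hz)) fun z hz ↦ by
      have hw := sub_mul_sqrt_ne_zero (hne z hz)
      have hTz : T z - β₂ = (z - z * √(4 + 3 * z ^ 2)) * deriv T z := by linarith [hode z hz]
      rw [deriv_sub_const_fun, hTz, (hE z hz).deriv, smul_eq_mul, smul_eq_mul, ← mul_assoc,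
        div_mul_cancel₀ _ hw]
  refine ⟨α, fun z hz ↦ ?_⟩
  rw [Tsol₂_eq_add_mul_homogeneousSolution, mul_comm, ← smul_eq_mul, ← hα z hz, add_sub_cancel]

theorem classical_angular_solution_two_general (α β₂ : ℝ) {s : Set ℝ} (hs : IsOpen s)
    (hs' : IsPreconnected s) (hs₀ : 0 ∉ s) :
    DifferentiableOn ℝ (Tsol₂ α β₂) s ∧
    (∀ z ∈ s, (z - z * √(4 + 3 * z ^ 2)) * deriv (Tsol₂ α β₂) z - Tsol₂ α β₂ z + β₂ = 0) ∧
    (∀ z ∈ s,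
      3 * z ^ 2 * (1 + z ^ 2) * (deriv (Tsol₂ α β₂) z) ^ 2
        + 2 * z * Tsol₂ α β₂ z * deriv (Tsol₂ α β₂) z - (Tsol₂ α β₂ z) ^ 2
        - 2 * β₂ * z * deriv (Tsol₂ α β₂) z + 2 * β₂ * Tsol₂ α β₂ z - β₂ ^ 2 = 0) ∧
    (∀ T : ℝ → ℝ, DifferentiableOn ℝ T s →
      (∀ z ∈ s, (z - z * √(4 + 3 * z ^ 2)) * deriv T z - T z + β₂ = 0) →
      ∃ α' : ℝ, ∀ z ∈ s, T z = Tsol₂ α' β₂ z) := by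
  have hne : ∀ z ∈ s, z ≠ 0 := fun z hz ↦ ne_of_mem_of_not_mem hz hs₀
  refine ⟨fun z hz ↦ ?_, fun z hz ↦ Tsol₂_linear_equation α β₂ (hne z hz), fun z hz ↦ ?_,
    fun T hT hode ↦ exists_eq_Tsol₂_of_linear_equation hs hs' hs₀ hT hode⟩
  · exact (hasDerivAt_Tsol₂ α β₂ (hne z hz)).differentiableAt.differentiableWithinAt
  · rw [angular_equation_lhs_eq_neg_mul, Tsol₂_linear_equation α β₂ (hne z hz), zero_mul, neg_zero]

open Real in
/-- `T₂` is differentiable on `(0,∞)`, solves the first order linear equation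
`(z − z√(4+3z²))T′ − T + β₂ = 0` there (hence also the classical angular
equation), and every differentiable solution of the linear equation on `(0,∞)`
is of this form. -/
theorem classical_angular_solution_two (α β₂ : ℝ) :
    DifferentiableOn ℝ (Tsol₂ α β₂) (Set.Ioi 0) ∧
    (∀ z ∈ Set.Ioi (0 : ℝ),
      (z - z * sqrt (4 + 3 * z ^ 2)) * deriv (Tsol₂ α β₂) z - Tsol₂ α β₂ z + β₂ = 0) ∧
    (∀ z ∈ Set.Ioi (0 : ℝ),
      3 * z ^ 2 * (1 + z ^ 2) * (deriv (Tsol₂ α β₂) z) ^ 2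
        + 2 * z * Tsol₂ α β₂ z * deriv (Tsol₂ α β₂) z - (Tsol₂ α β₂ z) ^ 2
        - 2 * β₂ * z * deriv (Tsol₂ α β₂) z + 2 * β₂ * Tsol₂ α β₂ z - β₂ ^ 2 = 0) ∧
    (∀ T : ℝ → ℝ, DifferentiableOn ℝ T (Set.Ioi 0) →
      (∀ z ∈ Set.Ioi (0 : ℝ),
        (z - z * sqrt (4 + 3 * z ^ 2)) * deriv T z - T z + β₂ = 0) →
      ∃ α' : ℝ, ∀ z ∈ Set.Ioi (0 : ℝ), T z = Tsol₂ α' β₂ z) :=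
  classical_angular_solution_two_general α β₂ isOpen_Ioi isPreconnected_Ioi Set.self_notMem_Ioi
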